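/- The predicate formula M: ∀x (P(x) ∨ ¬P(x)) & ¬¬∃x P(x) → ∃x P(x) (the Markov principle) is absolutely realizable. -/

import Mathlib

set_option linter.unusedVariables false

namespace Cpc

/-! ### Recursion-theoretic preliminaries -/

/-- Kleene application `{e}(a)`: the unary partial recursive function with Gödel number `e`,
applied to `a`. -/
def K (e a : ℕ) : Part ℕ := Nat.Partrec.Code.eval (Denumerable.ofNat Nat.Partrec.Code e) a

/-- `(e)ᵢ`: the exponent of the `i`-th prime in the prime factorization of `e`. -/
noncomputable def pexp (i e : ℕ) : ℕ := Nat.factorization e (Nat.nth Nat.Prime i)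

/-! ### The Cantor pairing function and the enumeration `g` of finitely supported functions -/

/-- The Cantor pairing `c(x,y) = (x+y)(x+y+1)/2 + x`. -/
def cpair (x y : ℕ) : ℕ := (x + y) * (x + y + 1) / 2 + x

/-- Simultaneous computation of the two inverse projections of the Cantor pairing. -/
def lrAux : ℕ → ℕ × ℕ
  | 0 => (0, 0)
  | n + 1 =>
    let p := lrAux n
    if p.2 = 0 then (0, p.1 + 1) else (p.1 + 1, p.2 - 1)

/-- The first projection `l` of the Cantor pairing. -/
def cl (n : ℕ) : ℕ := (lrAux n).1

/-- The second projection `r` of the Cantor pairing. -/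
def cr (n : ℕ) : ℕ := (lrAux n).2

/-- `l*(x,y)`: `l*(x,0) = x`, `l*(x,y+1) = l(l*(x,y))`. -/
def lstar (x : ℕ) : ℕ → ℕ
  | 0 => x
  | y + 1 => cl (lstar x y)

/-- `g(x,y) = r(l*(x,y))`: the enumeration of all finitely supported functions `ℕ → ℕ`. -/
def g (x y : ℕ) : ℕ := cr (lstar x y)

/-- `h(x,y,0) = c(l(x),y)`, `h(x,y,z+1) = c(h(l(x),y,z), r(x))`. -/
def h : ℕ → ℕ → ℕ → ℕ
  | x, y, 0 => cpair (cl x) y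
  | x, y, z + 1 => cpair (h (cl x) y z) (cr x)


/-! ### The predicate language `L*` -/

/-- Individual terms of the language `L*`: individual variables (named by natural numbers)
and individual constants for all natural numbers. -/
inductive PTerm : Type
  | var (v : ℕ)
  | const (c : ℕ)
  deriving DecidableEq

/-- Evaluation of a term under a valuation of the individual variables. -/
def PTerm.eval (ρ : ℕ → ℕ) : PTerm → ℕ
  | var v => ρ v
  | const c => c

/-- The (free) variables of a term. -/
def PTerm.fv : PTerm → Finset ℕ
  | var v => {v}
  | const _ => ∅

/-- Formulas of the predicate language `L*`: `⊥`, atomic formulas `Pⁿᵢ(t₁,…,tₙ)`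
(where the predicate variable `Pⁿᵢ` is recorded by its index `i`; its arity `n` is the
length of the argument list), and the connectives and quantifiers. -/
inductive PFml : Type
  | bot
  | atom (i : ℕ) (args : List PTerm)
  | and (φ ψ : PFml)
  | or (φ ψ : PFml)
  | imp (φ ψ : PFml)
  | all (x : ℕ) (φ : PFml)
  | ex (x : ℕ) (φ : PFml)

/-- `¬Φ` abbreviates `Φ → ⊥`. -/
def PFml.not (φ : PFml) : PFml := φ.imp .bot

/-- `Φ ↔ Ψ` abbreviates `(Φ → Ψ) & (Ψ → Φ)`. -/
def PFml.iff (φ ψ : PFml) : PFml := (φ.imp ψ).and (ψ.imp φ)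

/-- Conjunction of a list of formulas. -/
def bigAnd (l : List PFml) : PFml := l.foldr PFml.and (PFml.bot.imp PFml.bot)

/-- The free variables of a formula. -/
def PFml.fv : PFml → Finset ℕ
  | bot => ∅
  | atom _ args => args.foldr (fun t s => t.fv ∪ s) ∅
  | and φ ψ => φ.fv ∪ ψ.fv
  | or φ ψ => φ.fv ∪ ψ.fv
  | imp φ ψ => φ.fv ∪ ψ.fv
  | all x φ => φ.fv.erase x
  | ex x φ => φ.fv.erase x

/-- The bound variables of a formula. -/
def PFml.bv : PFml → Finset ℕ
  | bot => ∅
  | atom _ _ => ∅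
  | and φ ψ => φ.bv ∪ ψ.bv
  | or φ ψ => φ.bv ∪ ψ.bv
  | imp φ ψ => φ.bv ∪ ψ.bv
  | all x φ => insert x φ.bv
  | ex x φ => insert x φ.bv

/-- A formula is closed if it has no free variables. -/
def PFml.Closed (φ : PFml) : Prop := φ.fv = ∅

/-- Simultaneous substitution of terms for variables in a term. -/
def PTerm.msub (s : ℕ → PTerm) : PTerm → PTerm
  | var v => s v
  | const c => const c

/-- Simultaneous (naive, i.e. non-capture-avoiding) substitution of terms for the free
occurrences of variables in a formula. -/
def PFml.msub (s : ℕ → PTerm) : PFml → PFml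
  | bot => bot
  | atom i args => atom i (args.map (PTerm.msub s))
  | and φ ψ => (φ.msub s).and (ψ.msub s)
  | or φ ψ => (φ.msub s).or (ψ.msub s)
  | imp φ ψ => (φ.msub s).imp (ψ.msub s)
  | all x φ => all x (φ.msub fun v => if v = x then .var x else s v)
  | ex x φ => ex x (φ.msub fun v => if v = x then .var x else s v)

/-- The substitution replacing the single variable `x` by the term `t`. -/
def sub1 (x : ℕ) (t : PTerm) : ℕ → PTerm := fun v => if v = x then t else .var v

/-- The simultaneous substitution `s` is free for (admissible in) the formula, i.e. no
variable of a substituted term gets captured by a quantifier. -/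
def PFml.FreeForM (s : ℕ → PTerm) : PFml → Prop
  | bot => True
  | atom _ _ => True
  | and φ ψ => φ.FreeForM s ∧ ψ.FreeForM s
  | or φ ψ => φ.FreeForM s ∧ ψ.FreeForM s
  | imp φ ψ => φ.FreeForM s ∧ ψ.FreeForM s
  | all x φ => (∀ v ∈ φ.fv, v ≠ x → x ∉ (s v).fv) ∧
      φ.FreeForM (fun v => if v = x then .var x else s v)
  | ex x φ => (∀ v ∈ φ.fv, v ≠ x → x ∉ (s v).fv) ∧
      φ.FreeForM (fun v => if v = x then .var x else s v)

/-! ### Interpretations and realizability -/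

/-- An `n`-ary generalized predicate. -/
def GenPred (n : ℕ) : Type := (Fin n → ℕ) → Set ℕ

/-- An interpretation assigns to each predicate variable `Pⁿᵢ` an `n`-ary generalized
predicate. -/
def Interp : Type := (n : ℕ) → ℕ → GenPred n

/-- The realizability relation `e rᶠ Φ` (relative to a valuation `ρ` of the individual
variables). -/
def Realizes (f : Interp) : (ℕ → ℕ) → ℕ → PFml → Prop
  | _, _, .bot => False
  | ρ, e, .atom i args => e ∈ f args.length i (fun j => (args.get j).eval ρ)
  | ρ, e, .and φ ψ => Realizes f ρ (pexp 0 e) φ ∧ Realizes f ρ (pexp 1 e) ψ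
  | ρ, e, .or φ ψ => (pexp 0 e = 0 ∧ Realizes f ρ (pexp 1 e) φ) ∨
      (pexp 0 e = 1 ∧ Realizes f ρ (pexp 1 e) ψ)
  | ρ, e, .imp φ ψ => ∀ a, Realizes f ρ a φ → ∃ b ∈ K e a, Realizes f ρ b ψ
  | ρ, e, .all x φ => ∀ a, ∃ b ∈ K e a, Realizes f (Function.update ρ x a) b φ
  | ρ, e, .ex x φ => Realizes f (Function.update ρ x (pexp 0 e)) (pexp 1 e) φ

/-- The zero valuation, used for closed formulas. -/
def rho0 : ℕ → ℕ := fun _ => 0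

/-- The closed formula `Φ` is realizable in the interpretation `f`. -/
def FRealizable (f : Interp) (φ : PFml) : Prop := ∃ e, Realizes f rho0 e φ

/-- The closed predicate formula `Φ` is (uniformly) absolutely realizable. -/
def AbsRealizable (φ : PFml) : Prop := ∃ e, ∀ f : Interp, Realizes f rho0 e φ


/-! ### The arithmetical fragment: `Z,E,S,A,M` are the predicate variables
`P¹₀, P²₀, P²₁, P³₀, P³₁`. -/

/-- `Z(t)`, i.e. the atomic formula `P¹₀(t)`. -/
def vZ (t : PTerm) : PFml := .atom 0 [t]
/-- `E(t,u)`, i.e. `P²₀(t,u)`. -/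
def vE (t u : PTerm) : PFml := .atom 0 [t, u]
/-- `S(t,u)`, i.e. `P²₁(t,u)`. -/
def vS (t u : PTerm) : PFml := .atom 1 [t, u]
/-- `A(t,u,w)`, i.e. `P³₀(t,u,w)`. -/
def vA (t u w : PTerm) : PFml := .atom 0 [t, u, w]
/-- `M(t,u,w)`, i.e. `P³₁(t,u,w)`. -/
def vM (t u w : PTerm) : PFml := .atom 1 [t, u, w]

/-- The standard reading of the arithmetical predicate symbols. -/
def arithStd : (n : ℕ) → ℕ → (Fin n → ℕ) → Prop
  | 1, 0, v => v 0 = 0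
  | 2, 0, v => v 0 = v 1
  | 2, 1, v => v 0 + 1 = v 1
  | 3, 0, v => v 0 + v 1 = v 2
  | 3, 1, v => v 0 * v 1 = v 2
  | _, _, _ => False

/-- The standard interpretation: an atomic arithmetical statement is realized by `e`
iff `e = 0` and the statement is true. -/
def stdInterp : Interp := fun n i v => {e | e = 0 ∧ arithStd n i v}

/-- Classical truth of an arithmetical formula in the standard model (atoms of
non-arithmetical predicate variables are read as false). -/
def TrueStd : (ℕ → ℕ) → PFml → Prop
  | _, .bot => False
  | ρ, .atom i args => arithStd args.length i (fun j => (args.get j).eval ρ)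
  | ρ, .and φ ψ => TrueStd ρ φ ∧ TrueStd ρ ψ
  | ρ, .or φ ψ => TrueStd ρ φ ∨ TrueStd ρ ψ
  | ρ, .imp φ ψ => TrueStd ρ φ → TrueStd ρ ψ
  | ρ, .all x φ => ∀ a, TrueStd (Function.update ρ x a) φ
  | ρ, .ex x φ => ∃ a, TrueStd (Function.update ρ x a) φ

/-- The pairs (arity, index) naming the arithmetical predicate symbols `Z,E,S,A,M`. -/
def arithSlot (n i : ℕ) : Prop := (n = 1 ∧ i = 0) ∨ (n = 2 ∧ i ≤ 1) ∨ (n = 3 ∧ i ≤ 1)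

/-- The `Ar`-formula `x ≤ t`, i.e. `∃z A(z,x,t)`. -/
def leF (z x : ℕ) (t : PTerm) : PFml := .ex z (vA (.var z) (.var x) t)

/-- `Δ₀`-formulas of the language `Ar`. -/
inductive IsDelta0 : PFml → Prop
  | bot : IsDelta0 .bot
  | atom {i : ℕ} {args : List PTerm} : arithSlot args.length i → IsDelta0 (.atom i args)
  | and {φ ψ} : IsDelta0 φ → IsDelta0 ψ → IsDelta0 (φ.and ψ)
  | or {φ ψ} : IsDelta0 φ → IsDelta0 ψ → IsDelta0 (φ.or ψ)
  | imp {φ ψ} : IsDelta0 φ → IsDelta0 ψ → IsDelta0 (φ.imp ψ)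
  | ball {x z : ℕ} {t : PTerm} {φ} : x ∉ t.fv → z ∉ t.fv → z ≠ x → IsDelta0 φ →
      IsDelta0 (.all x ((leF z x t).imp φ))
  | bex {x z : ℕ} {t : PTerm} {φ} : x ∉ t.fv → z ∉ t.fv → z ≠ x → IsDelta0 φ →
      IsDelta0 (.ex x ((leF z x t).and φ))

/-- `Σ`-formulas of the language `Ar`. -/
inductive IsSigma : PFml → Prop
  | delta0 {φ} : IsDelta0 φ → IsSigma φ
  | and {φ ψ} : IsSigma φ → IsSigma ψ → IsSigma (φ.and ψ)
  | or {φ ψ} : IsSigma φ → IsSigma ψ → IsSigma (φ.or ψ)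
  | ball {x z : ℕ} {t : PTerm} {φ} : x ∉ t.fv → z ∉ t.fv → z ≠ x → IsSigma φ →
      IsSigma (.all x ((leF z x t).imp φ))
  | bex {x z : ℕ} {t : PTerm} {φ} : x ∉ t.fv → z ∉ t.fv → z ≠ x → IsSigma φ →
      IsSigma (.ex x ((leF z x t).and φ))
  | ex {x : ℕ} {φ} : IsSigma φ → IsSigma (.ex x φ)




/-- Iterated universal quantification. -/
def alls (xs : List ℕ) (φ : PFml) : PFml := xs.foldr PFml.all φ

open PTerm (var const) in
/-- The axioms `A₁ – A₂₅` of the predicate version `IRA*` of intuitionistic Robinson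
arithmetic. -/
def IRAstarAxioms : List PFml := [
  alls [0,1,2] (((vS (var 0) (var 2)).and (vS (var 1) (var 2))).imp (vE (var 0) (var 1))),
  alls [0,1] ((vS (var 0) (var 1)).imp (vZ (var 1)).not),
  alls [0,1,2] (((vE (var 0) (var 1)).and (vE (var 0) (var 2))).imp (vE (var 1) (var 2))),
  alls [0,1,2] (((vE (var 0) (var 1)).and (vS (var 0) (var 2))).imp (vS (var 1) (var 2))),
  alls [0,1] ((vZ (var 1)).imp (vA (var 0) (var 1) (var 0))),
  alls [0,1,2,3,4] ((((vS (var 1) (var 2)).and (vA (var 0) (var 1) (var 3))).and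
      (vS (var 3) (var 4))).imp (vA (var 0) (var 2) (var 4))),
  alls [0,1] ((vZ (var 1)).imp (vM (var 0) (var 1) (var 1))),
  alls [0,1,2,3,4] ((((vS (var 1) (var 2)).and (vM (var 0) (var 1) (var 3))).and
      (vA (var 3) (var 0) (var 4))).imp (vM (var 0) (var 2) (var 4))),
  alls [0,1,2,3] (((vE (var 0) (var 1)).and (vA (var 0) (var 2) (var 3))).imp
      (vA (var 1) (var 2) (var 3))),
  alls [0,1,2,3] (((vE (var 1) (var 2)).and (vA (var 0) (var 1) (var 3))).imp
      (vA (var 0) (var 2) (var 3))),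
  alls [0,1,2,3] (((vE (var 0) (var 1)).and (vM (var 0) (var 2) (var 3))).imp
      (vM (var 1) (var 2) (var 3))),
  alls [0,1,2,3] (((vE (var 1) (var 2)).and (vM (var 0) (var 1) (var 3))).imp
      (vM (var 0) (var 2) (var 3))),
  PFml.all 0 ((vZ (var 0)).or (.ex 1 (vS (var 1) (var 0)))),
  PFml.ex 0 (vZ (var 0)),
  alls [0,1] (((vZ (var 0)).and (vZ (var 1))).imp (vE (var 0) (var 1))),
  alls [0,1] (((vE (var 0) (var 1)).and (vZ (var 0))).imp (vZ (var 1))),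
  PFml.all 0 (.ex 1 (vS (var 0) (var 1))),
  alls [0,1,2] (((vS (var 0) (var 1)).and (vS (var 0) (var 2))).imp (vE (var 1) (var 2))),
  alls [0,1,2] (((vS (var 0) (var 1)).and (vE (var 1) (var 2))).imp (vS (var 0) (var 2))),
  alls [0,1] (.ex 2 (vA (var 0) (var 1) (var 2))),
  alls [0,1,2,3] (((vA (var 0) (var 1) (var 2)).and (vA (var 0) (var 1) (var 3))).imp
      (vE (var 2) (var 3))),
  alls [0,1,2,3] (((vA (var 0) (var 1) (var 2)).and (vE (var 2) (var 3))).imp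
      (vA (var 0) (var 1) (var 3))),
  alls [0,1] (.ex 2 (vM (var 0) (var 1) (var 2))),
  alls [0,1,2,3] (((vM (var 0) (var 1) (var 2)).and (vM (var 0) (var 1) (var 3))).imp
      (vE (var 2) (var 3))),
  alls [0,1,2,3] (((vM (var 0) (var 1) (var 2)).and (vE (var 2) (var 3))).imp
      (vM (var 0) (var 1) (var 3)))]

/-- `A₂₆`: functionality of the formula `G`:
`∀x,y,z₁,z₂ (G(x,y,z₁) & G(x,y,z₂) → E(z₁,z₂))`. Here `G = G(x,y,z)` has distinguished
free variables `0,1,2` playing the role of `x,y,z`. -/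
def A26 (G : PFml) : PFml :=
  alls [0,1,2,3] ((G.and (G.msub (sub1 2 (.var 3)))).imp (vE (.var 2) (.var 3)))

/-- `H(y,x)`, i.e. `∃w(Z(w) & G(y,x,w))`, expressing `{y}(x) = 0`; here `y,x` are the
variables `1,0` and `w` is the fresh variable `5`. -/
def Hfml (G : PFml) : PFml :=
  .ex 5 ((vZ (.var 5)).and (G.msub fun v =>
    if v = 0 then .var 1 else if v = 1 then .var 0 else if v = 2 then .var 5 else .var v))

/-- `B(v,x)` with `v,x` the variables `4,0`; here `B = B(v,x)` has distinguished free
variables `0,1` playing the role of `v,x`. -/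
def B40 (B : PFml) : PFml :=
  B.msub fun v => if v = 0 then .var 4 else if v = 1 then .var 0 else .var v

/-- `A₂₇`: `∀y,z ¬¬∃v ∀x (x ≤ z → (B(v,x) ↔ H(y,x)))`. -/
def A27 (G B : PFml) : PFml :=
  alls [1,2] (PFml.not (PFml.not (.ex 4 (.all 0
    ((leF 6 0 (.var 2)).imp ((B40 B).iff (Hfml G)))))))

/-- `A₂₈`: `∀x,y (B(x,y) ∨ ¬B(x,y))`. -/
def A28 (B : PFml) : PFml := alls [0,1] (B.or B.not)

/-- `Q`: the conjunction of the formulas `A₁ – A₂₈`. -/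
def Qfml (G B : PFml) : PFml := bigAnd (IRAstarAxioms ++ [A26 G, A27 G B, A28 B])

/-- The formula `[n](t)`: `[0](t) = Z(t)`, `[n+1](t) = ∃xₙ([n](xₙ) & S(xₙ,t))`. -/
def numFt : ℕ → PTerm → PFml
  | 0, t => vZ t
  | n + 1, t => .ex n ((numFt n (.var n)).and (vS (.var n) t))



/-- The axiom of equality for the predicate variable `Pⁿᵢ`:
`∀x⃗ ∀y⃗ (E(x₁,y₁) & … & E(xₙ,yₙ) → (P(x⃗) → P(y⃗)))`. -/
def eqAx (n i : ℕ) : PFml :=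
  alls ((List.range n) ++ (List.range n).map (· + n))
    ((bigAnd ((List.range n).map fun j => vE (.var j) (.var (n + j)))).imp
      ((PFml.atom i ((List.range n).map PTerm.var)).imp
        (PFml.atom i ((List.range n).map fun j => PTerm.var (n + j)))))




/-- Schemes over the arithmetical language: formulas of the language `LS*`, whose
atoms are either arithmetical atoms built from the predicate symbols `Z,E,S,A,M` of
`Ar`, or atoms built from the predicate variables `Pⁿᵢ`. -/
inductive Scheme : Type
  | bot
  | sZ (t : PTerm)
  | sE (t u : PTerm)
  | sS (t u : PTerm)
  | sA (t u w : PTerm)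
  | sM (t u w : PTerm)
  | patom (i : ℕ) (args : List PTerm)
  | and (φ ψ : Scheme)
  | or (φ ψ : Scheme)
  | imp (φ ψ : Scheme)
  | all (x : ℕ) (φ : Scheme)
  | ex (x : ℕ) (φ : Scheme)

def Scheme.not (φ : Scheme) : Scheme := φ.imp .bot
def Scheme.iff (φ ψ : Scheme) : Scheme := (φ.imp ψ).and (ψ.imp φ)

def Scheme.fv : Scheme → Finset ℕ
  | bot => ∅
  | sZ t => t.fv
  | sE t u => t.fv ∪ u.fv
  | sS t u => t.fv ∪ u.fv
  | sA t u w => t.fv ∪ u.fv ∪ w.fv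
  | sM t u w => t.fv ∪ u.fv ∪ w.fv
  | patom _ args => args.foldr (fun t s => t.fv ∪ s) ∅
  | and φ ψ => φ.fv ∪ ψ.fv
  | or φ ψ => φ.fv ∪ ψ.fv
  | imp φ ψ => φ.fv ∪ ψ.fv
  | all x φ => φ.fv.erase x
  | ex x φ => φ.fv.erase x

/-- All individual variables occurring in a scheme (free or bound). -/
def Scheme.vars : Scheme → Finset ℕ
  | bot => ∅
  | sZ t => t.fv
  | sE t u => t.fv ∪ u.fv
  | sS t u => t.fv ∪ u.fv
  | sA t u w => t.fv ∪ u.fv ∪ w.fv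
  | sM t u w => t.fv ∪ u.fv ∪ w.fv
  | patom _ args => args.foldr (fun t s => t.fv ∪ s) ∅
  | and φ ψ => φ.vars ∪ ψ.vars
  | or φ ψ => φ.vars ∪ ψ.vars
  | imp φ ψ => φ.vars ∪ ψ.vars
  | all x φ => insert x φ.vars
  | ex x φ => insert x φ.vars

def Scheme.bv : Scheme → Finset ℕ
  | and φ ψ => φ.bv ∪ ψ.bv
  | or φ ψ => φ.bv ∪ ψ.bv
  | imp φ ψ => φ.bv ∪ ψ.bv
  | all x φ => insert x φ.bv
  | ex x φ => insert x φ.bv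
  | _ => ∅

def Scheme.Closed (φ : Scheme) : Prop := φ.fv = ∅

/-- The predicate variables (arity, index) occurring in a scheme. -/
def Scheme.pvars : Scheme → Finset (ℕ × ℕ)
  | patom i args => {(args.length, i)}
  | and φ ψ => φ.pvars ∪ ψ.pvars
  | or φ ψ => φ.pvars ∪ ψ.pvars
  | imp φ ψ => φ.pvars ∪ ψ.pvars
  | all _ φ => φ.pvars
  | ex _ φ => φ.pvars
  | _ => ∅

def Scheme.msub (s : ℕ → PTerm) : Scheme → Scheme
  | bot => bot
  | sZ t => sZ (t.msub s)
  | sE t u => sE (t.msub s) (u.msub s)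
  | sS t u => sS (t.msub s) (u.msub s)
  | sA t u w => sA (t.msub s) (u.msub s) (w.msub s)
  | sM t u w => sM (t.msub s) (u.msub s) (w.msub s)
  | patom i args => patom i (args.map (PTerm.msub s))
  | and φ ψ => (φ.msub s).and (ψ.msub s)
  | or φ ψ => (φ.msub s).or (ψ.msub s)
  | imp φ ψ => (φ.msub s).imp (ψ.msub s)
  | all x φ => all x (φ.msub fun v => if v = x then .var x else s v)
  | ex x φ => ex x (φ.msub fun v => if v = x then .var x else s v)

def Scheme.FreeForM (s : ℕ → PTerm) : Scheme → Prop
  | and φ ψ => φ.FreeForM s ∧ ψ.FreeForM s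
  | or φ ψ => φ.FreeForM s ∧ ψ.FreeForM s
  | imp φ ψ => φ.FreeForM s ∧ ψ.FreeForM s
  | all x φ => (∀ v ∈ φ.fv, v ≠ x → x ∉ (s v).fv) ∧
      φ.FreeForM (fun v => if v = x then .var x else s v)
  | ex x φ => (∀ v ∈ φ.fv, v ≠ x → x ∉ (s v).fv) ∧
      φ.FreeForM (fun v => if v = x then .var x else s v)
  | _ => True

/-- Realizability of schemes: arithmetical atoms are realized by `e` iff `e = 0` and the
atom is true in the standard model; atoms of predicate variables are interpreted by `f`. -/
def SReal (f : Interp) : (ℕ → ℕ) → ℕ → Scheme → Prop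
  | _, _, .bot => False
  | ρ, e, .sZ t => e = 0 ∧ t.eval ρ = 0
  | ρ, e, .sE t u => e = 0 ∧ t.eval ρ = u.eval ρ
  | ρ, e, .sS t u => e = 0 ∧ t.eval ρ + 1 = u.eval ρ
  | ρ, e, .sA t u w => e = 0 ∧ t.eval ρ + u.eval ρ = w.eval ρ
  | ρ, e, .sM t u w => e = 0 ∧ t.eval ρ * u.eval ρ = w.eval ρ
  | ρ, e, .patom i args => e ∈ f args.length i (fun j => (args.get j).eval ρ)
  | ρ, e, .and φ ψ => SReal f ρ (pexp 0 e) φ ∧ SReal f ρ (pexp 1 e) ψ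
  | ρ, e, .or φ ψ => (pexp 0 e = 0 ∧ SReal f ρ (pexp 1 e) φ) ∨
      (pexp 0 e = 1 ∧ SReal f ρ (pexp 1 e) ψ)
  | ρ, e, .imp φ ψ => ∀ a, SReal f ρ a φ → ∃ b ∈ K e a, SReal f ρ b ψ
  | ρ, e, .all x φ => ∀ a, ∃ b ∈ K e a, SReal f (Function.update ρ x a) b φ
  | ρ, e, .ex x φ => SReal f (Function.update ρ x (pexp 0 e)) (pexp 1 e) φ

/-- A closed scheme is uniformly absolutely realizable if a single `e` realizes it in
every interpretation. -/
def AbsRealizableS (φ : Scheme) : Prop := ∃ e, ∀ f : Interp, SReal f rho0 e φ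

/-- Classical truth of a scheme with no predicate variables (arithmetical formula)
in the standard model. -/
def STrue : (ℕ → ℕ) → Scheme → Prop
  | _, .bot => False
  | ρ, .sZ t => t.eval ρ = 0
  | ρ, .sE t u => t.eval ρ = u.eval ρ
  | ρ, .sS t u => t.eval ρ + 1 = u.eval ρ
  | ρ, .sA t u w => t.eval ρ + u.eval ρ = w.eval ρ
  | ρ, .sM t u w => t.eval ρ * u.eval ρ = w.eval ρ
  | _, .patom _ _ => False
  | ρ, .and φ ψ => STrue ρ φ ∧ STrue ρ ψ
  | ρ, .or φ ψ => STrue ρ φ ∨ STrue ρ ψ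
  | ρ, .imp φ ψ => STrue ρ φ → STrue ρ ψ
  | ρ, .all x φ => ∀ a, STrue (Function.update ρ x a) φ
  | ρ, .ex x φ => ∃ a, STrue (Function.update ρ x a) φ

/-- `x ≤ t` in the scheme language: `∃z A(z,x,t)`. -/
def leS (z x : ℕ) (t : PTerm) : Scheme := .ex z (.sA (.var z) (.var x) t)

/-- `Δ₀`-formulas of `Ar` (as schemes). -/
inductive IsDelta0S : Scheme → Prop
  | bot : IsDelta0S .bot
  | sZ (t) : IsDelta0S (.sZ t)
  | sE (t u) : IsDelta0S (.sE t u)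
  | sS (t u) : IsDelta0S (.sS t u)
  | sA (t u w) : IsDelta0S (.sA t u w)
  | sM (t u w) : IsDelta0S (.sM t u w)
  | and {φ ψ} : IsDelta0S φ → IsDelta0S ψ → IsDelta0S (φ.and ψ)
  | or {φ ψ} : IsDelta0S φ → IsDelta0S ψ → IsDelta0S (φ.or ψ)
  | imp {φ ψ} : IsDelta0S φ → IsDelta0S ψ → IsDelta0S (φ.imp ψ)
  | ball {x z : ℕ} {t : PTerm} {φ} : x ∉ t.fv → z ∉ t.fv → z ≠ x → IsDelta0S φ →
      IsDelta0S (.all x ((leS z x t).imp φ))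
  | bex {x z : ℕ} {t : PTerm} {φ} : x ∉ t.fv → z ∉ t.fv → z ≠ x → IsDelta0S φ →
      IsDelta0S (.ex x ((leS z x t).and φ))

/-- `Σ`-formulas of `Ar` (as schemes). -/
inductive IsSigmaS : Scheme → Prop
  | delta0 {φ} : IsDelta0S φ → IsSigmaS φ
  | and {φ ψ} : IsSigmaS φ → IsSigmaS ψ → IsSigmaS (φ.and ψ)
  | or {φ ψ} : IsSigmaS φ → IsSigmaS ψ → IsSigmaS (φ.or ψ)
  | ball {x z : ℕ} {t : PTerm} {φ} : x ∉ t.fv → z ∉ t.fv → z ≠ x → IsSigmaS φ →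
      IsSigmaS (.all x ((leS z x t).imp φ))
  | bex {x z : ℕ} {t : PTerm} {φ} : x ∉ t.fv → z ∉ t.fv → z ≠ x → IsSigmaS φ →
      IsSigmaS (.ex x ((leS z x t).and φ))
  | ex {x : ℕ} {φ} : IsSigmaS φ → IsSigmaS (.ex x φ)

/-- `Φ[c]`: replace each atom `Pⁿᵢ(t₁,…,tₙ)` of a predicate variable by
`Pⁿ⁺¹ᵢ(c,t₁,…,tₙ)` (arithmetical atoms are unchanged). -/
def Scheme.bracketC (c : ℕ) : Scheme → Scheme
  | patom i args => patom i (.const c :: args)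
  | and φ ψ => (φ.bracketC c).and (ψ.bracketC c)
  | or φ ψ => (φ.bracketC c).or (ψ.bracketC c)
  | imp φ ψ => (φ.bracketC c).imp (ψ.bracketC c)
  | all x φ => all x (φ.bracketC c)
  | ex x φ => ex x (φ.bracketC c)
  | φ => φ

/-- `Φ[z]` for a variable `z`: replace each atom `Pⁿᵢ(t₁,…,tₙ)` of a predicate variable
by `Pⁿ⁺¹ᵢ(z,t₁,…,tₙ)`. -/
def Scheme.bracketV (z : ℕ) : Scheme → Scheme
  | patom i args => patom i (.var z :: args)
  | and φ ψ => (φ.bracketV z).and (ψ.bracketV z)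
  | or φ ψ => (φ.bracketV z).or (ψ.bracketV z)
  | imp φ ψ => (φ.bracketV z).imp (ψ.bracketV z)
  | all x φ => all x (φ.bracketV z)
  | ex x φ => ex x (φ.bracketV z)
  | φ => φ

/-- The interpretation `f_c`: `f_c(Pⁿᵢ)(k₁,…,kₙ) = f(Pⁿ⁺¹ᵢ)(c,k₁,…,kₙ)`. -/
def interpCons (c : ℕ) (f : Interp) : Interp := fun n i v => f (n + 1) i (Fin.cons c v)

/-- Does the predicate variable `Pⁿᵢ` occur in the scheme? -/
def Scheme.occursP (n i : ℕ) : Scheme → Prop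
  | patom j args => j = i ∧ args.length = n
  | and φ ψ => φ.occursP n i ∨ ψ.occursP n i
  | or φ ψ => φ.occursP n i ∨ ψ.occursP n i
  | imp φ ψ => φ.occursP n i ∨ ψ.occursP n i
  | all _ φ => φ.occursP n i
  | ex _ φ => φ.occursP n i
  | _ => False

/-- The substitution of the terms `args` for the distinguished variables `x₁,…,xₙ`
(named `0,…,n-1`). -/
def argSub (args : List PTerm) : ℕ → PTerm :=
  fun v => if h : v < args.length then args.get ⟨v, h⟩ else .var v

/-- Substitution of schemes for predicate variables: each atom `Pⁿᵢ(t₁,…,tₙ)` is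
replaced by the result of simultaneously substituting `t₁,…,tₙ` for the distinguished
variables `0,…,n-1` of the scheme `σ n i`. -/
def Scheme.substP (σ : ℕ → ℕ → Scheme) : Scheme → Scheme
  | patom i args => (σ args.length i).msub (argSub args)
  | and φ ψ => (φ.substP σ).and (ψ.substP σ)
  | or φ ψ => (φ.substP σ).or (ψ.substP σ)
  | imp φ ψ => (φ.substP σ).imp (ψ.substP σ)
  | all x φ => all x (φ.substP σ)
  | ex x φ => ex x (φ.substP σ)
  | φ => φ

/-- The list of schemes `σ` is acceptable for substitution in the given scheme:
(1) at every atom of a predicate variable the substitution of the argument terms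
for the distinguished variables is capture-free, and (2) no atom of a predicate
variable lies in the scope of a quantifier binding a "superfluous" parameter of the
scheme substituted for that variable. -/
def Scheme.Acceptable (σ : ℕ → ℕ → Scheme) : Scheme → Prop
  | patom i args => (σ args.length i).FreeForM (argSub args)
  | and φ ψ => φ.Acceptable σ ∧ ψ.Acceptable σ
  | or φ ψ => φ.Acceptable σ ∧ ψ.Acceptable σ
  | imp φ ψ => φ.Acceptable σ ∧ ψ.Acceptable σ
  | all x φ => (∀ n i, φ.occursP n i → x ∉ (σ n i).fv \ Finset.range n) ∧ φ.Acceptable σ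
  | ex x φ => (∀ n i, φ.occursP n i → x ∉ (σ n i).fv \ Finset.range n) ∧ φ.Acceptable σ
  | _ => True

/-- The universal closure of a scheme. -/
def Scheme.univClosure (φ : Scheme) : Scheme :=
  (φ.fv.sort (· ≤ ·)).foldr Scheme.all φ




/-- Natural deduction for the intuitionistic predicate calculus `IQC` in the
language `L*`. -/
inductive IQC : List PFml → PFml → Prop
  | hyp {Γ : List PFml} {φ : PFml} : φ ∈ Γ → IQC Γ φ
  | botE {Γ φ} : IQC Γ .bot → IQC Γ φ
  | andI {Γ : List PFml} {φ ψ : PFml} : IQC Γ φ → IQC Γ ψ → IQC Γ (φ.and ψ)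
  | andE1 {Γ : List PFml} {φ ψ : PFml} : IQC Γ (φ.and ψ) → IQC Γ φ
  | andE2 {Γ : List PFml} {φ ψ : PFml} : IQC Γ (φ.and ψ) → IQC Γ ψ
  | orI1 {Γ : List PFml} {φ ψ : PFml} : IQC Γ φ → IQC Γ (φ.or ψ)
  | orI2 {Γ : List PFml} {φ ψ : PFml} : IQC Γ ψ → IQC Γ (φ.or ψ)
  | orE {Γ φ ψ χ} : IQC Γ (φ.or ψ) → IQC (φ :: Γ) χ → IQC (ψ :: Γ) χ → IQC Γ χ
  | impI {Γ : List PFml} {φ ψ : PFml} : IQC (φ :: Γ) ψ → IQC Γ (φ.imp ψ)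
  | impE {Γ : List PFml} {φ ψ : PFml} : IQC Γ (φ.imp ψ) → IQC Γ φ → IQC Γ ψ
  | allI {Γ x φ} : IQC Γ φ → (∀ ψ ∈ Γ, x ∉ ψ.fv) → IQC Γ (.all x φ)
  | allE {Γ x φ} (t : PTerm) : IQC Γ (.all x φ) → φ.FreeForM (sub1 x t) →
      IQC Γ (φ.msub (sub1 x t))
  | exI {Γ x φ} (t : PTerm) : IQC Γ (φ.msub (sub1 x t)) → φ.FreeForM (sub1 x t) →
      IQC Γ (.ex x φ)
  | exE {Γ x φ χ} : IQC Γ (.ex x φ) → IQC (φ :: Γ) χ → x ∉ χ.fv →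
      (∀ ψ ∈ Γ, x ∉ ψ.fv) → IQC Γ χ

/-- `Pⁿᵢ` occurs in the formula. -/
def PFml.occursP (n i : ℕ) : PFml → Prop
  | .atom j args => j = i ∧ args.length = n
  | .and φ ψ => φ.occursP n i ∨ ψ.occursP n i
  | .or φ ψ => φ.occursP n i ∨ ψ.occursP n i
  | .imp φ ψ => φ.occursP n i ∨ ψ.occursP n i
  | .all _ φ => φ.occursP n i
  | .ex _ φ => φ.occursP n i
  | _ => False



/-- Substitution of formulas for predicate variables. -/
def PFml.substP (σ : ℕ → ℕ → PFml) : PFml → PFml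
  | .atom i args => (σ args.length i).msub (argSub args)
  | .and φ ψ => (φ.substP σ).and (ψ.substP σ)
  | .or φ ψ => (φ.substP σ).or (ψ.substP σ)
  | .imp φ ψ => (φ.substP σ).imp (ψ.substP σ)
  | .all x φ => .all x (φ.substP σ)
  | .ex x φ => .ex x (φ.substP σ)
  | .bot => .bot

def PFml.AcceptableP (σ : ℕ → ℕ → PFml) : PFml → Prop
  | .atom i args => (σ args.length i).FreeForM (argSub args)
  | .and φ ψ => φ.AcceptableP σ ∧ ψ.AcceptableP σ
  | .or φ ψ => φ.AcceptableP σ ∧ ψ.AcceptableP σ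
  | .imp φ ψ => φ.AcceptableP σ ∧ ψ.AcceptableP σ
  | .all x φ => (∀ n i, φ.occursP n i → x ∉ (σ n i).fv \ Finset.range n) ∧ φ.AcceptableP σ
  | .ex x φ => (∀ n i, φ.occursP n i → x ∉ (σ n i).fv \ Finset.range n) ∧ φ.AcceptableP σ
  | .bot => True

/-- `φ` is a substitutional instance of the predicate formula `base`. -/
def IsInstance (base φ : PFml) : Prop :=
  ∃ σ : ℕ → ℕ → PFml, base.AcceptableP σ ∧ φ = base.substP σ



inductive LATerm : Type
  | var (v : ℕ)
  | zero
  | succ (t : LATerm)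
  | add (t u : LATerm)
  | mul (t u : LATerm)

def LATerm.eval (ρ : ℕ → ℕ) : LATerm → ℕ
  | var v => ρ v
  | zero => 0
  | succ t => t.eval ρ + 1
  | add t u => t.eval ρ + u.eval ρ
  | mul t u => t.eval ρ * u.eval ρ

def LATerm.fv : LATerm → Finset ℕ
  | var v => {v}
  | zero => ∅
  | succ t => t.fv
  | add t u => t.fv ∪ u.fv
  | mul t u => t.fv ∪ u.fv

def LATerm.msub (s : ℕ → LATerm) : LATerm → LATerm
  | var v => s v
  | zero => zero
  | succ t => succ (t.msub s)
  | add t u => add (t.msub s) (u.msub s)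
  | mul t u => mul (t.msub s) (u.msub s)

/-- The numeral for `n`. -/
def numeral : ℕ → LATerm
  | 0 => .zero
  | n + 1 => .succ (numeral n)

inductive LAFml : Type
  | eq (t u : LATerm)
  | and (φ ψ : LAFml)
  | or (φ ψ : LAFml)
  | imp (φ ψ : LAFml)
  | not (φ : LAFml)
  | all (x : ℕ) (φ : LAFml)
  | ex (x : ℕ) (φ : LAFml)

def LAFml.fv : LAFml → Finset ℕ
  | eq t u => t.fv ∪ u.fv
  | and φ ψ => φ.fv ∪ ψ.fv
  | or φ ψ => φ.fv ∪ ψ.fv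
  | imp φ ψ => φ.fv ∪ ψ.fv
  | not φ => φ.fv
  | all x φ => φ.fv.erase x
  | ex x φ => φ.fv.erase x

def LAFml.msub (s : ℕ → LATerm) : LAFml → LAFml
  | eq t u => eq (t.msub s) (u.msub s)
  | and φ ψ => (φ.msub s).and (ψ.msub s)
  | or φ ψ => (φ.msub s).or (ψ.msub s)
  | imp φ ψ => (φ.msub s).imp (ψ.msub s)
  | not φ => (φ.msub s).not
  | all x φ => all x (φ.msub fun v => if v = x then .var x else s v)
  | ex x φ => ex x (φ.msub fun v => if v = x then .var x else s v)

def sub1LA (x : ℕ) (t : LATerm) : ℕ → LATerm := fun v => if v = x then t else .var v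

def LAFml.FreeForM (s : ℕ → LATerm) : LAFml → Prop
  | and φ ψ => φ.FreeForM s ∧ ψ.FreeForM s
  | or φ ψ => φ.FreeForM s ∧ ψ.FreeForM s
  | imp φ ψ => φ.FreeForM s ∧ ψ.FreeForM s
  | not φ => φ.FreeForM s
  | all x φ => (∀ v ∈ φ.fv, v ≠ x → x ∉ (s v).fv) ∧
      φ.FreeForM (fun v => if v = x then .var x else s v)
  | ex x φ => (∀ v ∈ φ.fv, v ≠ x → x ∉ (s v).fv) ∧
      φ.FreeForM (fun v => if v = x then .var x else s v)
  | _ => True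

/-- Classical truth of an `LA`-formula in the standard model. -/
def LATrue : (ℕ → ℕ) → LAFml → Prop
  | ρ, .eq t u => t.eval ρ = u.eval ρ
  | ρ, .and φ ψ => LATrue ρ φ ∧ LATrue ρ ψ
  | ρ, .or φ ψ => LATrue ρ φ ∨ LATrue ρ ψ
  | ρ, .imp φ ψ => LATrue ρ φ → LATrue ρ ψ
  | ρ, .not φ => ¬ LATrue ρ φ
  | ρ, .all x φ => ∀ a, LATrue (Function.update ρ x a) φ
  | ρ, .ex x φ => ∃ a, LATrue (Function.update ρ x a) φ


/-- Kleene's recursive realizability for `LA`-formulas. -/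
def LAReal : (ℕ → ℕ) → ℕ → LAFml → Prop
  | ρ, e, .eq t u => e = 0 ∧ t.eval ρ = u.eval ρ
  | ρ, e, .and φ ψ => LAReal ρ (pexp 0 e) φ ∧ LAReal ρ (pexp 1 e) ψ
  | ρ, e, .or φ ψ => (pexp 0 e = 0 ∧ LAReal ρ (pexp 1 e) φ) ∨
      (pexp 0 e = 1 ∧ LAReal ρ (pexp 1 e) ψ)
  | ρ, e, .imp φ ψ => ∀ a, LAReal ρ a φ → ∃ b ∈ K e a, LAReal ρ b ψ
  | ρ, _, .not φ => ∀ a, ¬ LAReal ρ a φ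
  | ρ, e, .all x φ => ∀ a, ∃ b ∈ K e a, LAReal (Function.update ρ x a) b φ
  | ρ, e, .ex x φ => LAReal (Function.update ρ x (pexp 0 e)) (pexp 1 e) φ

/-- `t₁ ≤ t₂` in `LA`: `∃v (t₁ + v = t₂)`. -/
def leLA (x v : ℕ) (t : LATerm) : LAFml := .ex v (.eq (.add (.var x) (.var v)) t)

inductive IsDelta0LA : LAFml → Prop
  | eq (t u) : IsDelta0LA (.eq t u)
  | and {φ ψ} : IsDelta0LA φ → IsDelta0LA ψ → IsDelta0LA (φ.and ψ)
  | or {φ ψ} : IsDelta0LA φ → IsDelta0LA ψ → IsDelta0LA (φ.or ψ)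
  | imp {φ ψ} : IsDelta0LA φ → IsDelta0LA ψ → IsDelta0LA (φ.imp ψ)
  | not {φ} : IsDelta0LA φ → IsDelta0LA φ.not
  | ball {x v : ℕ} {t : LATerm} {φ} : x ∉ t.fv → v ∉ t.fv → v ≠ x → IsDelta0LA φ →
      IsDelta0LA (.all x ((leLA x v t).imp φ))
  | bex {x v : ℕ} {t : LATerm} {φ} : x ∉ t.fv → v ∉ t.fv → v ≠ x → IsDelta0LA φ →
      IsDelta0LA (.ex x ((leLA x v t).and φ))

inductive IsSigmaLA : LAFml → Prop
  | delta0 {φ} : IsDelta0LA φ → IsSigmaLA φ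
  | and {φ ψ} : IsSigmaLA φ → IsSigmaLA ψ → IsSigmaLA (φ.and ψ)
  | or {φ ψ} : IsSigmaLA φ → IsSigmaLA ψ → IsSigmaLA (φ.or ψ)
  | ball {x v : ℕ} {t : LATerm} {φ} : x ∉ t.fv → v ∉ t.fv → v ≠ x → IsSigmaLA φ →
      IsSigmaLA (.all x ((leLA x v t).imp φ))
  | bex {x v : ℕ} {t : LATerm} {φ} : x ∉ t.fv → v ∉ t.fv → v ≠ x → IsSigmaLA φ →
      IsSigmaLA (.ex x ((leLA x v t).and φ))
  | ex {x : ℕ} {φ} : IsSigmaLA φ → IsSigmaLA (.ex x φ)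

/-- Natural deduction over `LA` from a set `Ax` of non-logical axioms
(intuitionistic logic). -/
inductive LD (Ax : LAFml → Prop) : List LAFml → LAFml → Prop
  | ax {Γ φ} : Ax φ → LD Ax Γ φ
  | hyp {Γ φ} : φ ∈ Γ → LD Ax Γ φ
  | andI {Γ : List LAFml} {φ ψ : LAFml} : LD Ax Γ φ → LD Ax Γ ψ → LD Ax Γ (φ.and ψ)
  | andE1 {Γ : List LAFml} {φ ψ : LAFml} : LD Ax Γ (φ.and ψ) → LD Ax Γ φ
  | andE2 {Γ : List LAFml} {φ ψ : LAFml} : LD Ax Γ (φ.and ψ) → LD Ax Γ ψ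
  | orI1 {Γ : List LAFml} {φ ψ : LAFml} : LD Ax Γ φ → LD Ax Γ (φ.or ψ)
  | orI2 {Γ : List LAFml} {φ ψ : LAFml} : LD Ax Γ ψ → LD Ax Γ (φ.or ψ)
  | orE {Γ φ ψ χ} : LD Ax Γ (φ.or ψ) → LD Ax (φ :: Γ) χ → LD Ax (ψ :: Γ) χ → LD Ax Γ χ
  | impI {Γ : List LAFml} {φ ψ : LAFml} : LD Ax (φ :: Γ) ψ → LD Ax Γ (φ.imp ψ)
  | impE {Γ : List LAFml} {φ ψ : LAFml} : LD Ax Γ (φ.imp ψ) → LD Ax Γ φ → LD Ax Γ ψ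
  | notI {Γ : List LAFml} {φ ψ : LAFml} : LD Ax (φ :: Γ) ψ → LD Ax (φ :: Γ) ψ.not → LD Ax Γ φ.not
  | notE {Γ : List LAFml} {φ ψ : LAFml} : LD Ax Γ φ → LD Ax Γ φ.not → LD Ax Γ ψ
  | allI {Γ x φ} : LD Ax Γ φ → (∀ ψ ∈ Γ, x ∉ ψ.fv) → LD Ax Γ (.all x φ)
  | allE {Γ x φ} (t : LATerm) : LD Ax Γ (.all x φ) → φ.FreeForM (sub1LA x t) →
      LD Ax Γ (φ.msub (sub1LA x t))
  | exI {Γ x φ} (t : LATerm) : LD Ax Γ (φ.msub (sub1LA x t)) → φ.FreeForM (sub1LA x t) →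
      LD Ax Γ (.ex x φ)
  | exE {Γ x φ χ} : LD Ax Γ (.ex x φ) → LD Ax (φ :: Γ) χ → x ∉ χ.fv →
      (∀ ψ ∈ Γ, x ∉ ψ.fv) → LD Ax Γ χ

open LATerm (var) in
/-- The axioms of equality and the Peano axioms for successor, sum and product
(without induction). -/
def baseAxioms : List LAFml := [
  .all 0 (.eq (var 0) (var 0)),
  .all 0 (.all 1 (.all 2 ((LAFml.eq (var 0) (var 1)).imp
    ((LAFml.eq (var 0) (var 2)).imp (.eq (var 1) (var 2)))))),
  .all 0 (.all 1 ((LAFml.eq (var 0) (var 1)).imp (.eq (.succ (var 0)) (.succ (var 1))))),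
  .all 0 (.all 1 ((LAFml.eq (.succ (var 0)) (.succ (var 1))).imp (.eq (var 0) (var 1)))),
  .all 0 (LAFml.not (.eq (.succ (var 0)) .zero)),
  .all 0 (.all 1 (.all 2 ((LAFml.eq (var 0) (var 1)).imp
    (.eq (.add (var 0) (var 2)) (.add (var 1) (var 2)))))),
  .all 0 (.all 1 (.all 2 ((LAFml.eq (var 0) (var 1)).imp
    (.eq (.add (var 2) (var 0)) (.add (var 2) (var 1)))))),
  .all 0 (.all 1 (.all 2 ((LAFml.eq (var 0) (var 1)).imp
    (.eq (.mul (var 0) (var 2)) (.mul (var 1) (var 2)))))),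
  .all 0 (.all 1 (.all 2 ((LAFml.eq (var 0) (var 1)).imp
    (.eq (.mul (var 2) (var 0)) (.mul (var 2) (var 1)))))),
  .all 0 (.eq (.add (var 0) .zero) (var 0)),
  .all 0 (.all 1 (.eq (.add (var 0) (.succ (var 1))) (.succ (.add (var 0) (var 1))))),
  .all 0 (.eq (.mul (var 0) .zero) .zero),
  .all 0 (.all 1 (.eq (.mul (var 0) (.succ (var 1)))
    (.add (.mul (var 0) (var 1)) (var 0))))]

/-- The axioms of intuitionistic Robinson arithmetic `IRA`: the Peano axioms with the
induction scheme replaced by `∀x (x = 0 ∨ ∃y (x = sy))`. -/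
def IRAax (φ : LAFml) : Prop :=
  φ ∈ baseAxioms ∨
    φ = .all 0 ((LAFml.eq (.var 0) .zero).or (.ex 1 (.eq (.var 0) (.succ (.var 1)))))

/-- An instance of the induction scheme. -/
def indInst (x : ℕ) (φ : LAFml) : LAFml :=
  ((φ.msub (sub1LA x .zero)).and
    (.all x (φ.imp (φ.msub (sub1LA x (.succ (.var x))))))).imp (.all x φ)

/-- The axioms of Heyting arithmetic `HA`. -/
def HAax (ψ : LAFml) : Prop := ψ ∈ baseAxioms ∨ ∃ x φ, ψ = indInst x φ




/-- Translation of schemes into pure predicate formulas: the arithmetical predicate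
symbols `Z,E,S,A,M` become the predicate variables `P¹₀,P²₀,P²₁,P³₀,P³₁`, and the other
predicate variables are renamed injectively so as to avoid these five. -/
def Scheme.toPFml : Scheme → PFml
  | .bot => .bot
  | .sZ t => vZ t
  | .sE t u => vE t u
  | .sS t u => vS t u
  | .sA t u w => vA t u w
  | .sM t u w => vM t u w
  | .patom i args => .atom (i + 2) args
  | .and φ ψ => φ.toPFml.and ψ.toPFml
  | .or φ ψ => φ.toPFml.or ψ.toPFml
  | .imp φ ψ => φ.toPFml.imp ψ.toPFml
  | .all x φ => .all x φ.toPFml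
  | .ex x φ => .ex x φ.toPFml

/-- `Eq(E,P₁,…,Pₘ)`: the conjunction of the axioms of equality for the predicate
variables of the scheme `Φ` (as renamed by `Scheme.toPFml`). -/
noncomputable def EqFor (Φ : Scheme) : PFml :=
  bigAnd (Φ.pvars.toList.map fun p => eqAx p.1 (p.2 + 2))

/-- `Φ*`: the pure predicate formula
`Q(Z,E,S,A,M) & Eq(E,P₁,…,Pₘ) → Φ(Z,E,S,A,M,P₁,…,Pₘ)` associated with a scheme `Φ`. -/
noncomputable def SchemeStar (G B : PFml) (Φ : Scheme) : PFml :=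
  ((Qfml G B).and (EqFor Φ)).imp Φ.toPFml

/-- The Markov principle `M` as a pure predicate formula, with `P` the unary
predicate variable `P¹₁`. -/
def Mfml : PFml :=
  ((PFml.all 0 ((PFml.atom 1 [.var 0]).or (PFml.atom 1 [.var 0]).not)).and
    (PFml.ex 0 (PFml.atom 1 [.var 0])).not.not).imp (PFml.ex 0 (PFml.atom 1 [.var 0]))

/-- `G(z,x,y)` where `z,x,y` are the variables `2,0,1` and the distinguished variables
`0,1,2` of `G` play the role of `x,y,z` in `G(x,y,z)` (expressing `{x}(y)=z`). -/
def Gzxy (G : PFml) : PFml :=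
  G.msub fun v => if v = 0 then .var 2 else if v = 1 then .var 0 else
    if v = 2 then .var 1 else .var v

/-- The scheme `nCT` as a pure predicate formula: `P` is the predicate variable `P¹₁`
and `Q'` is `P²₂`. -/
def nCTfml (G : PFml) : PFml :=
  (PFml.all 0 ((PFml.atom 1 [.var 0]).not.imp
      (PFml.ex 1 (PFml.atom 2 [.var 0, .var 1])))).imp
    (PFml.ex 2 (PFml.all 0 ((PFml.atom 1 [.var 0]).not.imp
      (PFml.ex 1 ((Gzxy G).and (PFml.atom 2 [.var 0, .var 1]))))))

/-- The pure predicate formula `nCT*`, i.e. `Q & Eq(E,P,Q') → nCT`. -/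
def nCTstar (G B : PFml) : PFml :=
  ((Qfml G B).and ((eqAx 1 1).and (eqAx 2 2))).imp (nCTfml G)

/-- The calculus `MQC`: intuitionistic predicate calculus together with all
substitutional instances of the Markov principle `M` and of the formula `nCT*`
as axioms. -/
inductive MQC (G B : PFml) : List PFml → PFml → Prop
  | axM {Γ : List PFml} {φ : PFml} : IsInstance Mfml φ → MQC G B Γ φ
  | axCT {Γ : List PFml} {φ : PFml} : IsInstance (nCTstar G B) φ → MQC G B Γ φ
  | hyp {Γ : List PFml} {φ : PFml} : φ ∈ Γ → MQC G B Γ φ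
  | botE {Γ φ} : MQC G B Γ .bot → MQC G B Γ φ
  | andI {Γ : List PFml} {φ ψ : PFml} : MQC G B Γ φ → MQC G B Γ ψ → MQC G B Γ (φ.and ψ)
  | andE1 {Γ : List PFml} {φ ψ : PFml} : MQC G B Γ (φ.and ψ) → MQC G B Γ φ
  | andE2 {Γ : List PFml} {φ ψ : PFml} : MQC G B Γ (φ.and ψ) → MQC G B Γ ψ
  | orI1 {Γ : List PFml} {φ ψ : PFml} : MQC G B Γ φ → MQC G B Γ (φ.or ψ)
  | orI2 {Γ : List PFml} {φ ψ : PFml} : MQC G B Γ ψ → MQC G B Γ (φ.or ψ)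
  | orE {Γ : List PFml} {φ ψ χ : PFml} : MQC G B Γ (φ.or ψ) → MQC G B (φ :: Γ) χ →
      MQC G B (ψ :: Γ) χ → MQC G B Γ χ
  | impI {Γ : List PFml} {φ ψ : PFml} : MQC G B (φ :: Γ) ψ → MQC G B Γ (φ.imp ψ)
  | impE {Γ : List PFml} {φ ψ : PFml} : MQC G B Γ (φ.imp ψ) → MQC G B Γ φ → MQC G B Γ ψ
  | allI {Γ x φ} : MQC G B Γ φ → (∀ ψ ∈ Γ, x ∉ ψ.fv) → MQC G B Γ (.all x φ)
  | allE {Γ x φ} (t : PTerm) : MQC G B Γ (.all x φ) → φ.FreeForM (sub1 x t) →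
      MQC G B Γ (φ.msub (sub1 x t))
  | exI {Γ x φ} (t : PTerm) : MQC G B Γ (φ.msub (sub1 x t)) → φ.FreeForM (sub1 x t) →
      MQC G B Γ (.ex x φ)
  | exE {Γ x φ χ} : MQC G B Γ (.ex x φ) → MQC G B (φ :: Γ) χ → x ∉ χ.fv →
      (∀ ψ ∈ Γ, x ∉ ψ.fv) → MQC G B Γ χ

/-- The classical predicate calculus `CQC`: intuitionistic predicate calculus together
with the law of the excluded middle. -/
inductive CQC : List PFml → PFml → Prop
  | em {Γ : List PFml} (φ : PFml) : CQC Γ (φ.or φ.not)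
  | hyp {Γ : List PFml} {φ : PFml} : φ ∈ Γ → CQC Γ φ
  | botE {Γ φ} : CQC Γ .bot → CQC Γ φ
  | andI {Γ : List PFml} {φ ψ : PFml} : CQC Γ φ → CQC Γ ψ → CQC Γ (φ.and ψ)
  | andE1 {Γ : List PFml} {φ ψ : PFml} : CQC Γ (φ.and ψ) → CQC Γ φ
  | andE2 {Γ : List PFml} {φ ψ : PFml} : CQC Γ (φ.and ψ) → CQC Γ ψ
  | orI1 {Γ : List PFml} {φ ψ : PFml} : CQC Γ φ → CQC Γ (φ.or ψ)
  | orI2 {Γ : List PFml} {φ ψ : PFml} : CQC Γ ψ → CQC Γ (φ.or ψ)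
  | orE {Γ : List PFml} {φ ψ χ : PFml} : CQC Γ (φ.or ψ) → CQC (φ :: Γ) χ →
      CQC (ψ :: Γ) χ → CQC Γ χ
  | impI {Γ : List PFml} {φ ψ : PFml} : CQC (φ :: Γ) ψ → CQC Γ (φ.imp ψ)
  | impE {Γ : List PFml} {φ ψ : PFml} : CQC Γ (φ.imp ψ) → CQC Γ φ → CQC Γ ψ
  | allI {Γ x φ} : CQC Γ φ → (∀ ψ ∈ Γ, x ∉ ψ.fv) → CQC Γ (.all x φ)
  | allE {Γ x φ} (t : PTerm) : CQC Γ (.all x φ) → φ.FreeForM (sub1 x t) →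
      CQC Γ (φ.msub (sub1 x t))
  | exI {Γ x φ} (t : PTerm) : CQC Γ (φ.msub (sub1 x t)) → φ.FreeForM (sub1 x t) →
      CQC Γ (.ex x φ)
  | exE {Γ x φ χ} : CQC Γ (.ex x φ) → CQC (φ :: Γ) χ → x ∉ χ.fv →
      (∀ ψ ∈ Γ, x ∉ ψ.fv) → CQC Γ χ

/-- Auxiliary translation for the predicate form: the formula expressing that the
`LA`-term `t` has value `v`; `k` is a supply of fresh variables, and the next unused
fresh variable is returned. -/
def LATerm.pf : LATerm → ℕ → ℕ → PFml × ℕ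
  | .var u, v, k => (vE (.var u) (.var v), k)
  | .zero, v, k => (vZ (.var v), k)
  | .succ t, v, k =>
      let r := t.pf k (k + 1)
      (.ex k (r.1.and (vS (.var k) (.var v))), r.2)
  | .add t u, v, k =>
      let r1 := t.pf k (k + 2)
      let r2 := u.pf (k + 1) r1.2
      (.ex k (.ex (k + 1) (r1.1.and (r2.1.and (vA (.var k) (.var (k + 1)) (.var v))))), r2.2)
  | .mul t u, v, k =>
      let r1 := t.pf k (k + 2)
      let r2 := u.pf (k + 1) r1.2
      (.ex k (.ex (k + 1) (r1.1.and (r2.1.and (vM (.var k) (.var (k + 1)) (.var v))))), r2.2)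

/-- Auxiliary translation for the predicate form of an `LA`-formula;
`k` is a supply of fresh variables. -/
def LAFml.pf : LAFml → ℕ → PFml
  | .eq t u, k =>
      let r1 := t.pf k (k + 2)
      let r2 := u.pf (k + 1) r1.2
      .ex k (.ex (k + 1) (r1.1.and (r2.1.and (vE (.var k) (.var (k + 1))))))
  | .and φ ψ, k => (φ.pf k).and (ψ.pf k)
  | .or φ ψ, k => (φ.pf k).or (ψ.pf k)
  | .imp φ ψ, k => (φ.pf k).imp (ψ.pf k)
  | .not φ, k => (φ.pf k).not
  | .all x φ, k => .all x (φ.pf k)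
  | .ex x φ, k => .ex x (φ.pf k)

def LATerm.vmax : LATerm → ℕ
  | .var v => v + 1
  | .zero => 0
  | .succ t => t.vmax
  | .add t u => max t.vmax u.vmax
  | .mul t u => max t.vmax u.vmax

def LAFml.vmax : LAFml → ℕ
  | .eq t u => max t.vmax u.vmax
  | .and φ ψ => max φ.vmax ψ.vmax
  | .or φ ψ => max φ.vmax ψ.vmax
  | .imp φ ψ => max φ.vmax ψ.vmax
  | .not φ => φ.vmax
  | .all x φ => max (x + 1) φ.vmax
  | .ex x φ => max (x + 1) φ.vmax

/-- The predicate form of an `LA`-formula: the result of eliminating the function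
symbols `0, s, +, ·` and replacing `=` by the predicate symbol `E`. -/
def predForm (φ : LAFml) : PFml := φ.pf φ.vmax

/-- Translation of `L*`-terms into `LA`-terms (constants become numerals). -/
def PTerm.toLA : PTerm → LATerm
  | .var v => .var v
  | .const c => numeral c

/-- Substitution of arithmetical formulas for the predicate variables of a predicate
formula: the atom `Pⁿᵢ(t₁,…,tₙ)` is replaced by the result of substituting `t₁,…,tₙ`
for the distinguished variables `0,…,n-1` of the `LA`-formula `σ n i`. -/
def PFml.toLA (σ : ℕ → ℕ → LAFml) : PFml → LAFml
  | .bot => .eq .zero (.succ .zero)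
  | .atom i args => (σ args.length i).msub
      (fun v => if h : v < args.length then (args.get ⟨v, h⟩).toLA else .var v)
  | .and φ ψ => (φ.toLA σ).and (ψ.toLA σ)
  | .or φ ψ => (φ.toLA σ).or (ψ.toLA σ)
  | .imp φ ψ => (φ.toLA σ).imp (ψ.toLA σ)
  | .all x φ => .all x (φ.toLA σ)
  | .ex x φ => .ex x (φ.toLA σ)

/-- Acceptability of the arithmetical substitution `σ` for a predicate formula. -/
def PFml.AcceptLA (σ : ℕ → ℕ → LAFml) : PFml → Prop
  | .atom i args => (σ args.length i).FreeForM
      (fun v => if h : v < args.length then (args.get ⟨v, h⟩).toLA else .var v)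
  | .and φ ψ => φ.AcceptLA σ ∧ ψ.AcceptLA σ
  | .or φ ψ => φ.AcceptLA σ ∧ ψ.AcceptLA σ
  | .imp φ ψ => φ.AcceptLA σ ∧ ψ.AcceptLA σ
  | .all x φ => (∀ n i, φ.occursP n i → x ∉ (σ n i).fv \ Finset.range n) ∧ φ.AcceptLA σ
  | .ex x φ => (∀ n i, φ.occursP n i → x ∉ (σ n i).fv \ Finset.range n) ∧ φ.AcceptLA σ
  | .bot => True

/-- The standard arithmetical reading of the predicate symbols `Z,E,S,A,M`. -/
def arithSig : ℕ → ℕ → LAFml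
  | 1, 0 => .eq (.var 0) .zero
  | 2, 0 => .eq (.var 0) (.var 1)
  | 2, 1 => .eq (.succ (.var 0)) (.var 1)
  | 3, 0 => .eq (.add (.var 0) (.var 1)) (.var 2)
  | 3, 1 => .eq (.mul (.var 0) (.var 1)) (.var 2)
  | _, _ => .eq .zero (.succ .zero)

/-- An instance of the Markov scheme `M` in the language `LA`. -/
def MinstLA (x : ℕ) (φ : LAFml) : LAFml :=
  ((LAFml.all x (φ.or φ.not)).and (LAFml.ex x φ).not.not).imp (.ex x φ)

/-- An instance of the scheme `nCT` in the language `LA` (with `x,y,e` the variables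
`0,1,2`): `∀x(¬Ψ(x) → ∃y Φ(x,y)) → ∃e ∀x(¬Ψ(x) → ∃y(G(e,x,y) & Φ(x,y)))`. -/
def nCTinstLA (GLA Ψ Φ : LAFml) : LAFml :=
  (LAFml.all 0 (Ψ.not.imp (.ex 1 Φ))).imp
    (.ex 2 (.all 0 (Ψ.not.imp (.ex 1 ((GLA.msub fun v =>
      if v = 0 then .var 2 else if v = 1 then .var 0 else
        if v = 2 then .var 1 else .var v).and Φ)))))

/-- The axioms of Markov arithmetic `MA = HA + M + nCT`. -/
def MAax (GLA : LAFml) (ψ : LAFml) : Prop :=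
  HAax ψ ∨ (∃ x φ, ψ = MinstLA x φ) ∨
    (∃ Ψ Φ : LAFml, 1 ∉ Ψ.fv ∧ 2 ∉ Ψ.fv ∧ 2 ∉ Φ.fv ∧ ψ = nCTinstLA GLA Ψ Φ)

/-- The axioms of the theory `CA`: the Peano axioms (those of `HA`) together with all
arithmetical substitutional instances of the predicate formulas `M` and `nCT*`. -/
def CAax (G B : PFml) (ψ : LAFml) : Prop :=
  HAax ψ ∨ (∃ σ, Mfml.AcceptLA σ ∧ ψ = Mfml.toLA σ) ∨
    (∃ σ, (nCTstar G B).AcceptLA σ ∧ ψ = (nCTstar G B).toLA σ)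


/-- The interpretation `f` is a model of the closed formula `Φ` if `Φ` is
`f`-realizable. -/
def IsModel (f : Interp) (φ : PFml) : Prop := ∃ e, Realizes f rho0 e φ

/-- A natural number `a` is `f`-standard if the formula `[n](a)` is `f`-realizable
for some `n`. -/
def fStandard (f : Interp) (a : ℕ) : Prop :=
  ∃ n e, Realizes f rho0 e (numFt n (.const a))

/-- The scheme `nCT` (with `P` the unary predicate variable `P¹₀` and `Q'` the binary
predicate variable `P²₀`, and `x,y,z` the variables `0,1,2`):
`∀x(¬P(x) → ∃y Q'(x,y)) → ∃z ∀x (¬P(x) → ∃y (G(z,x,y) & Q'(x,y)))`. -/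
def nCTscheme (GS : Scheme) : Scheme :=
  (Scheme.all 0 ((Scheme.patom 0 [.var 0]).not.imp
      (.ex 1 (.patom 0 [.var 0, .var 1])))).imp
    (.ex 2 (.all 0 ((Scheme.patom 0 [.var 0]).not.imp
      (.ex 1 ((GS.msub fun v => if v = 0 then .var 2 else if v = 1 then .var 0 else
          if v = 2 then .var 1 else .var v).and (.patom 0 [.var 0, .var 1]))))))

/-- The arithmetical formula `Φ(x) = ∃y (Z(y) & G(x,x,y))` (with `x,y` the
variables `0,1`), expressing `{x}(x) = 0`. -/
def PhiX (G : PFml) : PFml :=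
  .ex 1 ((vZ (.var 1)).and (G.msub fun v =>
    if v = 0 then .var 0 else if v = 1 then .var 0 else
      if v = 2 then .var 1 else .var v))

/-- The predicate formula `Ψ* = (Q → Ψ)` where `Ψ = ¬∀x(¬Φ(x) ∨ Φ(x))` and
`Φ(x) = ∃y(Z(y) & G(x,x,y))`. -/
def PsiStar (G B : PFml) : PFml :=
  (Qfml G B).imp (PFml.not (.all 0 (((PhiX G).not).or (PhiX G))))

end Cpc

namespace CpcAux

theorem primrec_pow : Primrec₂ (fun a b : ℕ => a ^ b) := by
  exact Primrec₂.unpaired'.1 Nat.Primrec.pow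

theorem pexp_eq (i n : ℕ) :
    Cpc.pexp i n = Nat.findGreatest (fun k => n % (Nat.nth Nat.Prime i) ^ k = 0) n := by
  have hp := Nat.prime_nth_prime i
  unfold Cpc.pexp
  generalize Nat.nth Nat.Prime i = p at hp
  rcases Nat.eq_zero_or_pos n with rfl | hn
  · simp
  symm
  rw [Nat.findGreatest_eq_iff]
  refine ⟨(Nat.factorization_lt p hn.ne').le, ?_, ?_⟩
  · intro _
    exact Nat.mod_eq_zero_of_dvd (Nat.ordProj_dvd n p)
  · intro k hk _ h
    have := (hp.pow_dvd_iff_le_factorization hn.ne').1 (Nat.dvd_of_mod_eq_zero h)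
    omega

theorem primrec_pexp (i : ℕ) : Primrec (Cpc.pexp i) := by
  have : Primrec (fun n : ℕ =>
      Nat.findGreatest (fun k => n % (Nat.nth Nat.Prime i) ^ k = 0) n) := by
    apply Primrec.nat_findGreatest Primrec.id
    exact Primrec.eq.comp₂
      (Primrec.nat_mod.comp₂ Primrec₂.left
        (primrec_pow.comp₂ (Primrec₂.const _) Primrec₂.right)) (Primrec₂.const 0)
  exact this.of_eq fun n => (pexp_eq i n).symm

theorem partrec_K : Partrec₂ Cpc.K :=
  Nat.Partrec.Code.eval_part.comp₂ ((Computable.ofNat _).comp Computable.fst).to₂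
    Computable.snd.to₂

theorem pexp_pair (x y : ℕ) :
    Cpc.pexp 0 (2 ^ x * 3 ^ y) = x ∧ Cpc.pexp 1 (2 ^ x * 3 ^ y) = y := by
  unfold Cpc.pexp
  rw [Nat.nth_prime_zero_eq_two, Nat.nth_prime_one_eq_three,
    Nat.factorization_mul (by positivity) (by positivity),
    Nat.prime_two.factorization_pow, Nat.prime_three.factorization_pow]
  simp

/-- Test at `x` whether the left disjunct is chosen. -/
noncomputable def test (a x : ℕ) : Part Bool :=
  (Cpc.K (Cpc.pexp 0 a) x).map fun b => decide (Cpc.pexp 0 b = 0)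

noncomputable def prog (a : ℕ) : Part ℕ :=
  (Nat.rfind (test a)).bind fun x =>
    (Cpc.K (Cpc.pexp 0 a) x).map fun b => 2 ^ x * 3 ^ (Cpc.pexp 1 b)

theorem partrec_test : Partrec₂ test := by
  have h1 : Partrec fun q : ℕ × ℕ => Cpc.K (Cpc.pexp 0 q.1) q.2 :=
    partrec_K.comp ((primrec_pexp 0).to_comp.comp Computable.fst) Computable.snd
  have h2 : Primrec fun b : ℕ => decide (Cpc.pexp 0 b = 0) :=
    (Primrec.eq.comp (primrec_pexp 0) (Primrec.const 0)).decide
  exact h1.map (h2.to_comp.comp Computable.snd).to₂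

theorem partrec_prog : Partrec prog := by
  have h1 : Partrec fun q : ℕ × ℕ => Cpc.K (Cpc.pexp 0 q.1) q.2 :=
    partrec_K.comp ((primrec_pexp 0).to_comp.comp Computable.fst) Computable.snd
  have h2 : Primrec fun q : (ℕ × ℕ) × ℕ => 2 ^ q.1.2 * 3 ^ (Cpc.pexp 1 q.2) :=
    Primrec.nat_mul.comp
      (primrec_pow.comp (Primrec.const 2) (Primrec.snd.comp Primrec.fst))
      (primrec_pow.comp (Primrec.const 3) ((primrec_pexp 1).comp Primrec.snd))
  exact (Partrec.rfind partrec_test).bind (h1.map h2.to_comp.to₂).to₂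

theorem exists_index : ∃ e, ∀ a, Cpc.K e a = prog a := by
  obtain ⟨c, hc⟩ := Nat.Partrec.Code.exists_code.1 (Partrec.nat_iff.1 partrec_prog)
  refine ⟨Encodable.encode c, fun a => ?_⟩
  simp [Cpc.K, hc]

end CpcAux

/-- the Markov principle
`∀x (P(x) ∨ ¬P(x)) & ¬¬∃x P(x) → ∃x P(x)` is absolutely realizable. -/
theorem markov_absolutely_realizable :
    ∃ e : ℕ, ∀ f : Cpc.Interp, Cpc.Realizes f Cpc.rho0 e Cpc.Mfml := by
  obtain ⟨e, he⟩ := CpcAux.exists_index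
  refine ⟨e, fun f => ?_⟩
  intro a ha
  obtain ⟨hall, hnn⟩ := ha
  have hex : ∃ d, Cpc.Realizes f Cpc.rho0 d (Cpc.PFml.ex 0 (Cpc.PFml.atom 1 [.var 0])) := by
    by_contra hne
    push Not at hne
    obtain ⟨b, _, hb⟩ := hnn 0 (fun d hd => absurd hd (hne d))
    exact hb
  obtain ⟨d, hd⟩ := hex
  have hdom : (Nat.rfind (CpcAux.test a)).Dom := by
    refine Nat.rfind_dom'.2 ⟨Cpc.pexp 0 d, ?_, ?_⟩
    · obtain ⟨b, hb, hr⟩ := hall (Cpc.pexp 0 d)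
      refine (Part.mem_map_iff _).2 ⟨b, hb, ?_⟩
      rcases hr with ⟨h0, _⟩ | ⟨_, h1⟩
      · simpa using h0
      · obtain ⟨c, _, hc⟩ := h1 _ hd
        exact hc.elim
    · intro m _
      obtain ⟨b, hb, _⟩ := hall m
      exact (Part.dom_iff_mem.2 ⟨b, hb⟩ : (Cpc.K _ m).Dom)
  obtain ⟨x, hx⟩ := Part.dom_iff_mem.1 hdom
  obtain ⟨b, hb, hbt⟩ := (Part.mem_map_iff _).1 (Nat.rfind_spec hx)
  have hb0 : Cpc.pexp 0 b = 0 := by simpa using hbt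
  obtain ⟨b', hb', hr⟩ := hall x
  obtain rfl := Part.mem_unique hb hb'
  refine ⟨2 ^ x * 3 ^ (Cpc.pexp 1 b), ?_, ?_⟩
  · rw [he]
    exact Part.mem_bind hx (Part.mem_map _ hb)
  · rcases hr with ⟨_, h1⟩ | ⟨h0, _⟩
    · show Cpc.Realizes f (Function.update Cpc.rho0 0 (Cpc.pexp 0 _)) (Cpc.pexp 1 _) _
      rw [(CpcAux.pexp_pair _ _).1, (CpcAux.pexp_pair _ _).2]
      exact h1
    · omega
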